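/- arXiv:1910.12666 — 3 statements merged into one kernel-verified Lean document; each statement's English description precedes it below -/
import Mathlib

section
/- Let ρ be a three-qubit density matrix, X₀, X₁, Y₀, Y₁ Hermitian qubit observables with eigenvalues ±1, Z₀ = σx, Z₁ = σy, and assume the four conditioning events in CP have positive probability. If CP = 4, then the corresponding normalized conditional states on Charlie's qubit are forced to be Pauli eigenprojectors: ϱ^C_{1,1|X₀,Y₀} = (I+σx)/2, ϱ^C_{0,1|X₁,Y₁} = (I+σx)/2, ϱ^C_{0,1|X₀,Y₁} = (I+σy)/2, and ϱ^C_{0,1|X₁,Y₀} = (I+σy)/2. -/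
/-!
A conditional probability is at most `1`, so `CP = 4` forces all four to be `1`. If
`Tr[Π σ] = Tr[σ]` for a projection `Π` and a positive semidefinite `σ`, then `Tr[(I - Π) σ] = 0`,
which gives `(I - Π) σ = 0`, that is `σ = Π σ = Π σ Π`. On a qubit the spectral projections of a
traceless dichotomic observable are singular, and a singular `2 × 2` matrix `Π` satisfies
`Π σ Π = Tr[Π σ] Π`; so `σ` is a multiple of `Π`.
-/

open Matrix Complex
open scoped Matrix Kronecker ComplexOrder

noncomputable section
namespace Paper

/-- Pauli X. -/
def sx : Matrix (Fin 2) (Fin 2) ℂ := !![0, 1; 1, 0]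
/-- Pauli Y. -/
def sy : Matrix (Fin 2) (Fin 2) ℂ := !![0, -Complex.I; Complex.I, 0]
/-- Pauli Z. -/
def sz : Matrix (Fin 2) (Fin 2) ℂ := !![1, 0; 0, -1]

/-- Projector onto outcome `a ∈ {0,1}` of a dichotomic observable `O`:
`Π₀ = (I+O)/2`, `Π₁ = (I−O)/2`. -/
def Proj {d : ℕ} (a : Fin 2) (O : Matrix (Fin d) (Fin d) ℂ) : Matrix (Fin d) (Fin d) ℂ :=
  (2 : ℂ)⁻¹ • (1 + if a = 0 then O else -O)

/-- Outer product `|ψ⟩⟨ψ|`. -/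
def outer {n : Type*} (ψ : n → ℂ) : Matrix n n ℂ :=
  Matrix.of fun i j => ψ i * star (ψ j)

/-- `ψ` is a unit vector. -/
def UnitVec {n : Type*} [Fintype n] (ψ : n → ℂ) : Prop := ∑ i, star (ψ i) * ψ i = 1

/-- Hermitian observable with eigenvalues `±1`. -/
def Dichotomic {d : ℕ} (O : Matrix (Fin d) (Fin d) ℂ) : Prop := O.IsHermitian ∧ O * O = 1

/-- Partial trace over the first two tensor factors. -/
def trAB {dA dB : ℕ} (M : Matrix (Fin dA × Fin dB × Fin 2) (Fin dA × Fin dB × Fin 2) ℂ) :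
    Matrix (Fin 2) (Fin 2) ℂ :=
  Matrix.of fun i j => ∑ k : Fin dA, ∑ l : Fin dB, M (k, l, i) (k, l, j)

/-- Unnormalized conditional state on Charlie's qubit:
`σ^C_{a,b|X,Y} = Tr_{AB}[(Π_{a|X} ⊗ Π_{b|Y} ⊗ I₂) ρ]`. -/
def condState {dA dB : ℕ} (ρ : Matrix (Fin dA × Fin dB × Fin 2) (Fin dA × Fin dB × Fin 2) ℂ)
    (X : Matrix (Fin dA) (Fin dA) ℂ) (Y : Matrix (Fin dB) (Fin dB) ℂ) (a b : Fin 2) :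
    Matrix (Fin 2) (Fin 2) ℂ :=
  trAB ((Proj a X ⊗ₖ (Proj b Y ⊗ₖ (1 : Matrix (Fin 2) (Fin 2) ℂ))) * ρ)

/-- Conditional probability `P(c_Z | ·) = Tr[Π_{c|Z} σ] / Tr[σ]`. -/
def condProb (Z σ : Matrix (Fin 2) (Fin 2) ℂ) (c : Fin 2) : ℝ :=
  ((Proj c Z * σ).trace).re / (σ.trace).re

/-- The fine-grained steering expression
`CP = P(0_{Z₀}|1_{X₀}1_{Y₀}) + P(0_{Z₀}|0_{X₁}1_{Y₁}) + P(0_{Z₁}|0_{X₀}1_{Y₁}) + P(0_{Z₁}|0_{X₁}1_{Y₀})`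
with `Z₀ = σx`, `Z₁ = σy`. -/
def CP {dA dB : ℕ} (ρ : Matrix (Fin dA × Fin dB × Fin 2) (Fin dA × Fin dB × Fin 2) ℂ)
    (X0 X1 : Matrix (Fin dA) (Fin dA) ℂ) (Y0 Y1 : Matrix (Fin dB) (Fin dB) ℂ) : ℝ :=
  condProb sx (condState ρ X0 Y0 1 1) 0 + condProb sx (condState ρ X1 Y1 0 1) 0 +
  condProb sy (condState ρ X0 Y1 0 1) 0 + condProb sy (condState ρ X1 Y0 0 1) 0

/-- The four conditioning events in `CP` have positive probability. -/
def PosEvents {dA dB : ℕ} (ρ : Matrix (Fin dA × Fin dB × Fin 2) (Fin dA × Fin dB × Fin 2) ℂ)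
    (X0 X1 : Matrix (Fin dA) (Fin dA) ℂ) (Y0 Y1 : Matrix (Fin dB) (Fin dB) ℂ) : Prop :=
  0 < ((condState ρ X0 Y0 1 1).trace).re ∧ 0 < ((condState ρ X1 Y1 0 1).trace).re ∧
  0 < ((condState ρ X0 Y1 0 1).trace).re ∧ 0 < ((condState ρ X1 Y0 0 1).trace).re

/-- Product across the bipartition `A|BC`. -/
def BisepA {dA dB : ℕ} (ψ : Fin dA × Fin dB × Fin 2 → ℂ) : Prop :=
  ∃ (u : Fin dA → ℂ) (v : Fin dB × Fin 2 → ℂ), ∀ i j k, ψ (i, j, k) = u i * v (j, k)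

/-- Product across the bipartition `B|AC`. -/
def BisepB {dA dB : ℕ} (ψ : Fin dA × Fin dB × Fin 2 → ℂ) : Prop :=
  ∃ (u : Fin dB → ℂ) (v : Fin dA × Fin 2 → ℂ), ∀ i j k, ψ (i, j, k) = u j * v (i, k)

/-- Product across the bipartition `C|AB`. -/
def BisepC {dA dB : ℕ} (ψ : Fin dA × Fin dB × Fin 2 → ℂ) : Prop :=
  ∃ (u : Fin 2 → ℂ) (v : Fin dA × Fin dB → ℂ), ∀ i j k, ψ (i, j, k) = v (i, j) * u k

/-- Genuine multipartite entanglement: not a product across any bipartition. -/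
def GenEnt {dA dB : ℕ} (ψ : Fin dA × Fin dB × Fin 2 → ℂ) : Prop :=
  ¬ BisepA ψ ∧ ¬ BisepB ψ ∧ ¬ BisepC ψ


/-- The normalized conditional state `ϱ = σ / Tr σ`. -/
def normState (σ : Matrix (Fin 2) (Fin 2) ℂ) : Matrix (Fin 2) (Fin 2) ℂ := (σ.trace)⁻¹ • σ

section Trace

open scoped MatrixOrder

variable {n 𝕜 : Type*} [Fintype n] [RCLike 𝕜] {A B : Matrix n n 𝕜}

lemma trace_mul_nonneg_of_posSemidef (hA : A.PosSemidef) (hB : B.PosSemidef) :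
    0 ≤ (A * B).trace := by
  classical
  obtain ⟨C, rfl⟩ := CStarAlgebra.nonneg_iff_eq_star_mul_self.mp hA.nonneg
  rw [star_eq_conjTranspose, trace_mul_cycle, trace_mul_cycle]
  exact (hB.mul_mul_conjTranspose_same C).trace_nonneg

lemma trace_mul_eq_zero_iff_of_posSemidef (hA : A.PosSemidef) (hB : B.PosSemidef) :
    (A * B).trace = 0 ↔ A * B = 0 := by
  classical
  refine ⟨fun h => ?_, fun h => by rw [h, trace_zero]⟩
  obtain ⟨C, rfl⟩ := CStarAlgebra.nonneg_iff_eq_star_mul_self.mp hA.nonneg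
  obtain ⟨D, rfl⟩ := CStarAlgebra.nonneg_iff_eq_star_mul_self.mp hB.nonneg
  simp only [star_eq_conjTranspose] at h ⊢
  have hCD : C * Dᴴ = 0 := by
    rw [← trace_conjTranspose_mul_self_eq_zero_iff, ← h, conjTranspose_mul,
      conjTranspose_conjTranspose, Matrix.mul_assoc, trace_mul_comm]
    simp only [Matrix.mul_assoc]
  calc Cᴴ * C * (Dᴴ * D) = Cᴴ * (C * Dᴴ) * D := by simp only [Matrix.mul_assoc]
    _ = 0 := by rw [hCD, Matrix.mul_zero, Matrix.zero_mul]

end Trace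

section StarProjection

open scoped MatrixOrder

variable {m n 𝕜 : Type*} [Fintype m] [Fintype n] [RCLike 𝕜]

lemma posSemidef_of_isStarProjection {P : Matrix n n 𝕜} (hP : IsStarProjection P) :
    P.PosSemidef :=
  hP.nonneg.posSemidef

lemma isStarProjection_kronecker {P : Matrix m m 𝕜} {Q : Matrix n n 𝕜}
    (hP : IsStarProjection P) (hQ : IsStarProjection Q) : IsStarProjection (P ⊗ₖ Q) where
  isIdempotentElem := by
    rw [IsIdempotentElem, ← mul_kronecker_mul, hP.isIdempotentElem.eq, hQ.isIdempotentElem.eq]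
  isSelfAdjoint := by
    rw [isSelfAdjoint_iff, star_eq_conjTranspose, conjTranspose_kronecker,
      ← star_eq_conjTranspose, ← star_eq_conjTranspose, hP.isSelfAdjoint.star_eq,
      hQ.isSelfAdjoint.star_eq]

end StarProjection

lemma mul_mul_self_of_det_eq_zero {R : Type*} [CommRing R] {M : Matrix (Fin 2) (Fin 2) R}
    (hM : M.det = 0) (N : Matrix (Fin 2) (Fin 2) R) : M * N * M = (M * N).trace • M := by
  rw [det_fin_two] at hM
  ext i j
  simp only [Matrix.mul_apply, Fin.sum_univ_two, trace_fin_two, Matrix.smul_apply, smul_eq_mul]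
  fin_cases i <;> fin_cases j <;> grind

lemma det_one_add_eq_zero_of_mul_self_eq_one {R : Type*} [CommRing R]
    {O : Matrix (Fin 2) (Fin 2) R} (hO : O * O = 1) (htr : O.trace = 0) : (1 + O).det = 0 := by
  have hsq : O 0 0 * O 0 0 + O 0 1 * O 1 0 = 1 := by
    simpa [Matrix.mul_apply, Fin.sum_univ_two] using congrFun₂ hO 0 0
  rw [trace_fin_two] at htr
  calc (1 + O).det = (1 + O 0 0) * (1 + O 1 1) - O 0 1 * O 1 0 := by simp [det_fin_two]
    _ = 0 := by linear_combination (1 + O 0 0) * htr - hsq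

section Dichotomic

variable {d : ℕ} {O : Matrix (Fin d) (Fin d) ℂ}

lemma Dichotomic.neg (hO : Dichotomic O) : Dichotomic (-O) :=
  ⟨hO.1.neg, by rw [neg_mul_neg, hO.2]⟩

lemma Dichotomic.isStarProjection_half_smul_one_add (hO : Dichotomic O) :
    IsStarProjection ((2 : ℂ)⁻¹ • (1 + O)) where
  isIdempotentElem := by
    rw [IsIdempotentElem, smul_mul_smul_comm, add_mul, mul_add, mul_add, hO.2, one_mul, mul_one,
      one_mul]
    module
  isSelfAdjoint := by
    rw [isSelfAdjoint_iff, star_smul, star_add, star_one, star_eq_conjTranspose O, hO.1.eq]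
    simp

lemma Dichotomic.isStarProjection_proj (hO : Dichotomic O) (a : Fin 2) :
    IsStarProjection (Proj a O) := by
  unfold Proj
  split_ifs
  exacts [hO.isStarProjection_half_smul_one_add, hO.neg.isStarProjection_half_smul_one_add]

end Dichotomic

lemma det_proj_eq_zero {O : Matrix (Fin 2) (Fin 2) ℂ} (hO : O * O = 1) (htr : O.trace = 0)
    (a : Fin 2) : (Proj a O).det = 0 := by
  rw [Proj, det_smul]
  split_ifs
  · rw [det_one_add_eq_zero_of_mul_self_eq_one hO htr, mul_zero]
  · have hneg : -O * -O = 1 := by rw [neg_mul_neg, hO]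
    have htr_neg : (-O).trace = 0 := by rw [trace_neg, htr, neg_zero]
    rw [det_one_add_eq_zero_of_mul_self_eq_one hneg htr_neg, mul_zero]

section CondProb

variable {Z σ : Matrix (Fin 2) (Fin 2) ℂ}

-- If `σ.trace = 0`, then `condProb Z σ c` is `0 / 0 = 0`.
lemma condProb_le_one (hZ : Dichotomic Z) (hσ : σ.PosSemidef) (c : Fin 2) :
    condProb Z σ c ≤ 1 := by
  have hcompl : 0 ≤ ((1 - Proj c Z) * σ).trace :=
    trace_mul_nonneg_of_posSemidef
      (posSemidef_of_isStarProjection (hZ.isStarProjection_proj c).one_sub) hσ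
  rw [sub_mul, one_mul, trace_sub, sub_nonneg] at hcompl
  exact div_le_one_of_le₀ (Complex.re_le_re hcompl) (Complex.re_le_re hσ.trace_nonneg)

lemma condProb_eq_one_iff (hZ : Dichotomic Z) (hσ : σ.PosSemidef) (hpos : 0 < σ.trace.re)
    (c : Fin 2) : condProb Z σ c = 1 ↔ Proj c Z * σ = σ := by
  have hP := hZ.isStarProjection_proj c
  have hPσ : 0 ≤ (Proj c Z * σ).trace :=
    trace_mul_nonneg_of_posSemidef (posSemidef_of_isStarProjection hP) hσ
  have him : σ.trace.im = (Proj c Z * σ).trace.im := by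
    rw [← (Complex.nonneg_iff.mp hσ.trace_nonneg).2, ← (Complex.nonneg_iff.mp hPσ).2]
  have hcompl := trace_mul_eq_zero_iff_of_posSemidef
    (posSemidef_of_isStarProjection hP.one_sub) hσ
  rw [sub_mul, one_mul, trace_sub, sub_eq_zero, sub_eq_zero] at hcompl
  rw [condProb, div_eq_one_iff_eq hpos.ne', eq_comm (b := σ), ← hcompl, Complex.ext_iff]
  exact ⟨fun h => ⟨h.symm, him⟩, fun h => h.1.symm⟩

lemma eq_trace_smul_proj (hZ : Dichotomic Z) (htr : Z.trace = 0) (hσ : σ.IsHermitian)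
    {c : Fin 2} (hfix : Proj c Z * σ = σ) : σ = σ.trace • Proj c Z := by
  have hfix' : σ * Proj c Z = σ := by
    have h := congrArg star hfix
    rwa [star_mul, (hZ.isStarProjection_proj c).isSelfAdjoint.star_eq, hσ.isSelfAdjoint.star_eq]
      at h
  calc σ = Proj c Z * σ * Proj c Z := by rw [hfix, hfix']
    _ = (Proj c Z * σ).trace • Proj c Z :=
      mul_mul_self_of_det_eq_zero (det_proj_eq_zero hZ.2 htr c) σ
    _ = σ.trace • Proj c Z := by rw [hfix]

lemma normState_eq_proj_of_condProb_eq_one (hZ : Dichotomic Z) (htr : Z.trace = 0)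
    (hσ : σ.PosSemidef) (hpos : 0 < σ.trace.re) {c : Fin 2} (hprob : condProb Z σ c = 1) :
    normState σ = Proj c Z := by
  have hne : σ.trace ≠ 0 := fun h => hpos.ne' (by rw [h, Complex.zero_re])
  rw [normState, inv_smul_eq_iff₀ hne]
  exact eq_trace_smul_proj hZ htr hσ.isHermitian ((condProb_eq_one_iff hZ hσ hpos c).mp hprob)

end CondProb

section CondState

variable {dA dB : ℕ}

lemma trAB_kronecker_one_mul_comm (A : Matrix (Fin dA) (Fin dA) ℂ)
    (B : Matrix (Fin dB) (Fin dB) ℂ)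
    (M : Matrix (Fin dA × Fin dB × Fin 2) (Fin dA × Fin dB × Fin 2) ℂ) :
    trAB ((A ⊗ₖ (B ⊗ₖ 1)) * M) = trAB (M * (A ⊗ₖ (B ⊗ₖ 1))) := by
  ext i j
  let block (i : Fin 2) (p : Fin dA × Fin dB) : Fin dA × Fin dB × Fin 2 := (p.1, p.2, i)
  let Mij := M.submatrix (block i) (block j)
  calc trAB ((A ⊗ₖ (B ⊗ₖ 1)) * M) i j = ((A ⊗ₖ B) * Mij).trace := by
        simp [trAB, Mij, block, trace, Matrix.mul_apply, one_apply, Fintype.sum_prod_type,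
          mul_assoc]
    _ = (Mij * (A ⊗ₖ B)).trace := trace_mul_comm _ _
    _ = trAB (M * (A ⊗ₖ (B ⊗ₖ 1))) i j := by
        simp [trAB, Mij, block, trace, Matrix.mul_apply, one_apply, Fintype.sum_prod_type]

lemma trAB_posSemidef {M : Matrix (Fin dA × Fin dB × Fin 2) (Fin dA × Fin dB × Fin 2) ℂ}
    (hM : M.PosSemidef) : (trAB M).PosSemidef := by
  have hsum : trAB M = ∑ k, ∑ l, M.submatrix (fun i => (k, l, i)) (fun i => (k, l, i)) := by
    ext i j
    simp only [trAB, of_apply, Matrix.sum_apply, submatrix_apply]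
  rw [hsum]
  exact posSemidef_sum _ fun k _ => posSemidef_sum _ fun l _ => hM.submatrix _

lemma condState_posSemidef {ρ : Matrix (Fin dA × Fin dB × Fin 2) (Fin dA × Fin dB × Fin 2) ℂ}
    (hρ : ρ.PosSemidef) {X : Matrix (Fin dA) (Fin dA) ℂ} {Y : Matrix (Fin dB) (Fin dB) ℂ}
    (hX : Dichotomic X) (hY : Dichotomic Y) (a b : Fin 2) :
    (condState ρ X Y a b).PosSemidef := by
  let K := Proj a X ⊗ₖ (Proj b Y ⊗ₖ (1 : Matrix (Fin 2) (Fin 2) ℂ))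
  have hproj : IsStarProjection K :=
    isStarProjection_kronecker (hX.isStarProjection_proj a)
      (isStarProjection_kronecker (hY.isStarProjection_proj b) (.one _))
  have hsandwich : condState ρ X Y a b = trAB (K * ρ * Kᴴ) := calc
    trAB (K * ρ) = trAB (K * (K * ρ)) := by rw [← mul_assoc, hproj.isIdempotentElem.eq]
    _ = trAB (K * ρ * K) := trAB_kronecker_one_mul_comm _ _ _
    _ = trAB (K * ρ * Kᴴ) := by rw [← star_eq_conjTranspose, hproj.isSelfAdjoint.star_eq]
  rw [hsandwich]
  exact trAB_posSemidef (hρ.mul_mul_conjTranspose_same K)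

end CondState

lemma dichotomic_sx : Dichotomic sx := by
  constructor
  · ext i j
    fin_cases i <;> fin_cases j <;> simp [sx]
  · simp [sx, one_fin_two]

lemma dichotomic_sy : Dichotomic sy := by
  constructor
  · ext i j
    fin_cases i <;> fin_cases j <;> simp [sy]
  · simp [sy, one_fin_two]

lemma trace_sx : sx.trace = 0 := by simp [sx]

lemma trace_sy : sy.trace = 0 := by simp [sy]

theorem stmt13_general {dA dB : ℕ}
    (ρ : Matrix (Fin dA × Fin dB × Fin 2) (Fin dA × Fin dB × Fin 2) ℂ) (hρ : ρ.PosSemidef)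
    (X0 X1 : Matrix (Fin dA) (Fin dA) ℂ) (Y0 Y1 : Matrix (Fin dB) (Fin dB) ℂ)
    (hX0 : Dichotomic X0) (hX1 : Dichotomic X1) (hY0 : Dichotomic Y0) (hY1 : Dichotomic Y1)
    (hpos : PosEvents ρ X0 X1 Y0 Y1)
    (hCP : CP ρ X0 X1 Y0 Y1 = 4) :
    normState (condState ρ X0 Y0 1 1) = Proj 0 sx ∧
    normState (condState ρ X1 Y1 0 1) = Proj 0 sx ∧
    normState (condState ρ X0 Y1 0 1) = Proj 0 sy ∧
    normState (condState ρ X1 Y0 0 1) = Proj 0 sy := by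
  obtain ⟨pos00, pos11, pos01, pos10⟩ := hpos
  have psd00 := condState_posSemidef hρ hX0 hY0 1 1
  have psd11 := condState_posSemidef hρ hX1 hY1 0 1
  have psd01 := condState_posSemidef hρ hX0 hY1 0 1
  have psd10 := condState_posSemidef hρ hX1 hY0 0 1
  have le00 := condProb_le_one dichotomic_sx psd00 0
  have le11 := condProb_le_one dichotomic_sx psd11 0
  have le01 := condProb_le_one dichotomic_sy psd01 0
  have le10 := condProb_le_one dichotomic_sy psd10 0
  rw [CP] at hCP
  exact ⟨
    normState_eq_proj_of_condProb_eq_one dichotomic_sx trace_sx psd00 pos00 (by linarith),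
    normState_eq_proj_of_condProb_eq_one dichotomic_sx trace_sx psd11 pos11 (by linarith),
    normState_eq_proj_of_condProb_eq_one dichotomic_sy trace_sy psd01 pos01 (by linarith),
    normState_eq_proj_of_condProb_eq_one dichotomic_sy trace_sy psd10 pos10 (by linarith)⟩

/-- if a three-qubit density matrix attains `CP = 4`, the four relevant
normalized conditional states on Charlie's qubit are the Pauli eigenprojectors
`(I+σx)/2` and `(I+σy)/2`. -/
theorem stmt13 (ρ : Matrix (Fin 2 × Fin 2 × Fin 2) (Fin 2 × Fin 2 × Fin 2) ℂ)
    (hρ : ρ.PosSemidef) (htr : ρ.trace = 1)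
    (X0 X1 Y0 Y1 : Matrix (Fin 2) (Fin 2) ℂ)
    (hX0 : Dichotomic X0) (hX1 : Dichotomic X1) (hY0 : Dichotomic Y0) (hY1 : Dichotomic Y1)
    (hpos : PosEvents ρ X0 X1 Y0 Y1)
    (hCP : CP ρ X0 X1 Y0 Y1 = 4) :
    normState (condState ρ X0 Y0 1 1) = Proj 0 sx ∧
    normState (condState ρ X1 Y1 0 1) = Proj 0 sx ∧
    normState (condState ρ X0 Y1 0 1) = Proj 0 sy ∧
    normState (condState ρ X1 Y0 0 1) = Proj 0 sy :=
  stmt13_general ρ hρ X0 X1 Y0 Y1 hX0 hX1 hY0 hY1 hpos hCP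

end Paper
end
end

section
/- Let |ψ⟩ = |χ⟩_{AB} ⊗ |φ⟩_C be a three-qubit pure state that is a product of a two-qubit state |χ⟩_{AB} on the first two factors and a qubit state |φ⟩_C on the third factor (bipartition C|AB). Then for every choice of Hermitian qubit observables X₀, X₁ (Alice) and Y₀, Y₁ (Bob) with eigenvalues ±1 such that the four conditioning events in CP (with Z₀ = σx, Z₁ = σy) have positive probability, CP = 2·[Tr(Π_{0|σx} |φ⟩⟨φ|) + Tr(Π_{0|σy} |φ⟩⟨φ|)], and hence CP ≤ 2 + √2. -/
open Matrix Complex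
open scoped Matrix Kronecker ComplexOrder

noncomputable section
namespace Paper

/-! Conditioning the product `τ ⊗ ω` on Alice's and Bob's outcomes only rescales Charlie's state
`ω`, and conditional probabilities do not see the scale. So each term of `CP` is an unconditional
outcome probability of `ω`, namely `(1 + x) / 2` or `(1 + y) / 2`, where `x` and `y` are the first
two Bloch coordinates of `ω`. Since `x² + y² ≤ 1` (positivity of `det ω`), `x + y ≤ √2`. -/

theorem im_trace_mul_eq_zero {n : Type*} [Fintype n] {A B : Matrix n n ℂ}
    (hA : A.IsHermitian) (hB : B.IsHermitian) : (A * B).trace.im = 0 := by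
  rw [← conj_eq_iff_im, ← star_def, ← trace_conjTranspose, conjTranspose_mul, hA.eq, hB.eq,
    trace_mul_comm]

section Outer

variable {n : Type*}

theorem outer_eq_vecMulVec (ψ : n → ℂ) : outer ψ = vecMulVec ψ (star ψ) := rfl

theorem posSemidef_outer [Finite n] (ψ : n → ℂ) : (outer ψ).PosSemidef :=
  posSemidef_vecMulVec_self_star ψ

theorem UnitVec.trace_outer [Fintype n] {ψ : n → ℂ} (hψ : UnitVec ψ) : (outer ψ).trace = 1 := by
  rw [outer_eq_vecMulVec, trace_vecMulVec, dotProduct_comm]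
  exact hψ

end Outer

section ProductState

variable {dA dB : ℕ}

/-- The state `τ ⊗ ω` with `τ` on Alice's and Bob's systems and `ω` on Charlie's qubit, reindexed
from the left-nested product of index types to the right-nested one used by `condState`. -/
def prodState (τ : Matrix (Fin dA × Fin dB) (Fin dA × Fin dB) ℂ) (ω : Matrix (Fin 2) (Fin 2) ℂ) :
    Matrix (Fin dA × Fin dB × Fin 2) (Fin dA × Fin dB × Fin 2) ℂ :=
  reindex (Equiv.prodAssoc _ _ _) (Equiv.prodAssoc _ _ _) (τ ⊗ₖ ω)

theorem outer_mul_eq_prodState (χ : Fin dA × Fin dB → ℂ) (φ : Fin 2 → ℂ) :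
    (outer fun i : Fin dA × Fin dB × Fin 2 => χ (i.1, i.2.1) * φ i.2.2) =
      prodState (outer χ) (outer φ) := by
  ext i j
  simp [outer, prodState, mul_mul_mul_comm]

theorem prodState_mul_prodState (τ τ' : Matrix (Fin dA × Fin dB) (Fin dA × Fin dB) ℂ)
    (ω ω' : Matrix (Fin 2) (Fin 2) ℂ) :
    prodState τ ω * prodState τ' ω' = prodState (τ * τ') (ω * ω') := by
  simp only [prodState, reindex_apply, submatrix_mul_equiv, mul_kronecker_mul]

theorem trAB_prodState (τ : Matrix (Fin dA × Fin dB) (Fin dA × Fin dB) ℂ)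
    (ω : Matrix (Fin 2) (Fin 2) ℂ) : trAB (prodState τ ω) = τ.trace • ω := by
  ext i j
  simp [trAB, prodState, trace, Fintype.sum_prod_type, Finset.sum_mul]

theorem condState_prodState (τ : Matrix (Fin dA × Fin dB) (Fin dA × Fin dB) ℂ)
    (ω : Matrix (Fin 2) (Fin 2) ℂ) (X : Matrix (Fin dA) (Fin dA) ℂ)
    (Y : Matrix (Fin dB) (Fin dB) ℂ) (a b : Fin 2) :
    condState (prodState τ ω) X Y a b = ((Proj a X ⊗ₖ Proj b Y) * τ).trace • ω := by
  have hproj : Proj a X ⊗ₖ (Proj b Y ⊗ₖ (1 : Matrix (Fin 2) (Fin 2) ℂ)) =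
      prodState (Proj a X ⊗ₖ Proj b Y) 1 :=
    (kronecker_assoc _ _ _).symm
  rw [condState, hproj, prodState_mul_prodState, one_mul, trAB_prodState]

end ProductState

section OutcomeProbability

theorem isHermitian_proj {d : ℕ} {O : Matrix (Fin d) (Fin d) ℂ} (hO : O.IsHermitian) (a : Fin 2) :
    (Proj a O).IsHermitian := by
  have hsum : (1 + if a = 0 then O else -O).IsHermitian := by
    split_ifs
    exacts [isHermitian_one.add hO, isHermitian_one.add hO.neg]
  exact hsum.smul (by simp [IsSelfAdjoint])

theorem re_trace_proj_zero_mul {d : ℕ} (O ω : Matrix (Fin d) (Fin d) ℂ) :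
    (Proj 0 O * ω).trace.re = (ω.trace.re + (O * ω).trace.re) / 2 := by
  simp [Proj, add_mul, div_eq_inv_mul, mul_add]

variable {Z ω : Matrix (Fin 2) (Fin 2) ℂ}

theorem condProb_smul (hZ : Z.IsHermitian) (hω : ω.IsHermitian) {s : ℂ} (hs : s.re ≠ 0)
    (c : Fin 2) : condProb Z (s • ω) c = condProb Z ω c := by
  have hnum : (Proj c Z * ω).trace.im = 0 := im_trace_mul_eq_zero (isHermitian_proj hZ c) hω
  have hden : ω.trace.im = 0 := by
    simpa only [one_mul] using im_trace_mul_eq_zero isHermitian_one hω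
  simp only [condProb, mul_smul_comm, trace_smul, smul_eq_mul, mul_re, hnum, hden, mul_zero,
    sub_zero, mul_div_mul_left _ _ hs]

theorem condProb_condState_prodState {dA dB : ℕ}
    {τ : Matrix (Fin dA × Fin dB) (Fin dA × Fin dB) ℂ} {X : Matrix (Fin dA) (Fin dA) ℂ}
    {Y : Matrix (Fin dB) (Fin dB) ℂ} {a b : Fin 2} (hZ : Z.IsHermitian) (hω : ω.IsHermitian)
    (htr : ω.trace = 1) (hpos : 0 < (condState (prodState τ ω) X Y a b).trace.re) (c : Fin 2) :
    condProb Z (condState (prodState τ ω) X Y a b) c = (Proj c Z * ω).trace.re := by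
  rw [condState_prodState] at hpos ⊢
  rw [trace_smul, htr, smul_eq_mul, mul_one] at hpos
  rw [condProb_smul hZ hω hpos.ne', condProb, htr, one_re, div_one]

end OutcomeProbability

section Bloch

theorem isHermitian_sx : sx.IsHermitian := by
  ext i j
  fin_cases i <;> fin_cases j <;> simp [sx]

theorem isHermitian_sy : sy.IsHermitian := by
  ext i j
  fin_cases i <;> fin_cases j <;> simp [sy]

variable {ω : Matrix (Fin 2) (Fin 2) ℂ}

theorem re_trace_sx_mul (hω : ω.IsHermitian) : (sx * ω).trace.re = 2 * (ω 0 1).re := by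
  have hconj : (ω 1 0).re = (ω 0 1).re := by rw [← hω.apply 1 0, star_def, conj_re]
  simp [sx, trace, vecMul, dotProduct, hconj, two_mul]

theorem re_trace_sy_mul (hω : ω.IsHermitian) : (sy * ω).trace.re = -2 * (ω 0 1).im := by
  have hconj : (ω 1 0).im = -(ω 0 1).im := by rw [← hω.apply 1 0, star_def, conj_im]
  simp [sy, trace, vecMul, dotProduct, hconj, two_mul]

theorem normSq_apply_zero_one_le (hω : ω.PosSemidef) :
    normSq (ω 0 1) ≤ (ω 0 0).re * (ω 1 1).re := by
  have hdet : 0 ≤ ω.det.re := (le_def.mp hω.det_nonneg).1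
  have him : (ω 0 0).im = 0 := conj_eq_iff_im.mp (hω.isHermitian.apply 0 0)
  rw [det_fin_two, ← hω.isHermitian.apply 1 0, star_def, mul_conj, sub_re, mul_re, him, zero_mul,
    sub_zero, ofReal_re] at hdet
  exact sub_nonneg.mp hdet

theorem sq_re_trace_sx_add_sq_re_trace_sy_le (hω : ω.PosSemidef) :
    (sx * ω).trace.re ^ 2 + (sy * ω).trace.re ^ 2 ≤ ω.trace.re ^ 2 := by
  calc (sx * ω).trace.re ^ 2 + (sy * ω).trace.re ^ 2
      = 4 * normSq (ω 0 1) := by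
        rw [re_trace_sx_mul hω.isHermitian, re_trace_sy_mul hω.isHermitian, normSq_apply]
        ring
    _ ≤ 4 * ((ω 0 0).re * (ω 1 1).re) := by gcongr; exact normSq_apply_zero_one_le hω
    _ ≤ ((ω 0 0).re + (ω 1 1).re) ^ 2 := by
        rw [← mul_assoc]
        exact four_mul_le_sq_add _ _
    _ = ω.trace.re ^ 2 := by rw [trace_fin_two, add_re]

theorem re_trace_proj_sx_add_re_trace_proj_sy_le (hω : ω.PosSemidef) (htr : ω.trace = 1) :
    (Proj 0 sx * ω).trace.re + (Proj 0 sy * ω).trace.re ≤ 1 + Real.sqrt 2 / 2 := by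
  set x := (sx * ω).trace.re
  set y := (sy * ω).trace.re
  have hdisk : x ^ 2 + y ^ 2 ≤ 1 := by
    simpa only [htr, one_re, one_pow] using sq_re_trace_sx_add_sq_re_trace_sy_le hω
  have hsum : x + y ≤ Real.sqrt 2 := Real.le_sqrt_of_sq_le <|
    calc (x + y) ^ 2 ≤ 2 * (x ^ 2 + y ^ 2) := add_sq_le
      _ ≤ 2 := by linarith
  calc (Proj 0 sx * ω).trace.re + (Proj 0 sy * ω).trace.re
      = 1 + (x + y) / 2 := by
        rw [re_trace_proj_zero_mul, re_trace_proj_zero_mul, htr, one_re]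
        ring
    _ ≤ 1 + Real.sqrt 2 / 2 := by gcongr

end Bloch

theorem stmt16_general {dA dB : ℕ} {τ : Matrix (Fin dA × Fin dB) (Fin dA × Fin dB) ℂ}
    {ω : Matrix (Fin 2) (Fin 2) ℂ} (hω : ω.PosSemidef) (htr : ω.trace = 1)
    {X0 X1 : Matrix (Fin dA) (Fin dA) ℂ} {Y0 Y1 : Matrix (Fin dB) (Fin dB) ℂ}
    (hpos : PosEvents (prodState τ ω) X0 X1 Y0 Y1) :
    CP (prodState τ ω) X0 X1 Y0 Y1
      = 2 * ((Proj 0 sx * ω).trace.re + (Proj 0 sy * ω).trace.re) ∧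
    CP (prodState τ ω) X0 X1 Y0 Y1 ≤ 2 + Real.sqrt 2 := by
  obtain ⟨hX0Y0, hX1Y1, hX0Y1, hX1Y0⟩ := hpos
  have hCP : CP (prodState τ ω) X0 X1 Y0 Y1
      = 2 * ((Proj 0 sx * ω).trace.re + (Proj 0 sy * ω).trace.re) := by
    rw [CP, condProb_condState_prodState isHermitian_sx hω.isHermitian htr hX0Y0,
      condProb_condState_prodState isHermitian_sx hω.isHermitian htr hX1Y1,
      condProb_condState_prodState isHermitian_sy hω.isHermitian htr hX0Y1,
      condProb_condState_prodState isHermitian_sy hω.isHermitian htr hX1Y0]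
    ring
  exact ⟨hCP, by linarith [re_trace_proj_sx_add_re_trace_proj_sy_le hω htr]⟩

/-- for a three-qubit pure state that is a product across the bipartition `C|AB`,
`CP = 2·[Tr(Π_{0|σx}|φ⟩⟨φ|) + Tr(Π_{0|σy}|φ⟩⟨φ|)]`, and hence `CP ≤ 2 + √2`. -/
theorem stmt16 (φC : Fin 2 → ℂ) (χ : Fin 2 × Fin 2 → ℂ)
    (hφ : UnitVec φC) (hχ : UnitVec χ)
    (X0 X1 Y0 Y1 : Matrix (Fin 2) (Fin 2) ℂ)
    (hX0 : Dichotomic X0) (hX1 : Dichotomic X1) (hY0 : Dichotomic Y0) (hY1 : Dichotomic Y1)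
    (hpos : PosEvents (outer fun i : Fin 2 × Fin 2 × Fin 2 => χ (i.1, i.2.1) * φC i.2.2)
      X0 X1 Y0 Y1) :
    CP (outer fun i : Fin 2 × Fin 2 × Fin 2 => χ (i.1, i.2.1) * φC i.2.2) X0 X1 Y0 Y1
      = 2 * (((Proj 0 sx * outer φC).trace).re + ((Proj 0 sy * outer φC).trace).re) ∧
    CP (outer fun i : Fin 2 × Fin 2 × Fin 2 => χ (i.1, i.2.1) * φC i.2.2) X0 X1 Y0 Y1
      ≤ 2 + Real.sqrt 2 := by
  rw [outer_mul_eq_prodState] at hpos ⊢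
  exact stmt16_general (posSemidef_outer φC) hφ.trace_outer hpos

end Paper
end
end

section
/- For V ∈ [0,1], let ρ_V = V·|GHZ⟩⟨GHZ| + (1−V)·I₈/8 be the noisy GHZ state, where |GHZ⟩ = (|000⟩ + |111⟩)/√2 and I₈ is the 8×8 identity matrix. With the observables X₀ = σx, X₁ = σy (Alice), Y₀ = σx, Y₁ = σy (Bob), and Z₀ = σx, Z₁ = σy (Charlie), the four conditioning events in CP have positive probability and CP(ρ_V) = 2 + 2V; in particular, CP(ρ_V) > 2 + √2 if and only if V > 1/√2. -/
open Matrix Complex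
open scoped Matrix Kronecker ComplexOrder

noncomputable section
namespace Paper

/-- The GHZ state `(|000⟩ + |111⟩)/√2`. -/
def ghz : Fin 2 × Fin 2 × Fin 2 → ℂ := fun i =>
  if i = (0, 0, 0) then (Real.sqrt 2 : ℂ)⁻¹ else if i = (1, 1, 1) then (Real.sqrt 2 : ℂ)⁻¹ else 0

/-- The noisy GHZ state `ρ_V = V·|GHZ⟩⟨GHZ| + (1−V)·I₈/8`. -/
def ghzV (V : ℝ) : Matrix (Fin 2 × Fin 2 × Fin 2) (Fin 2 × Fin 2 × Fin 2) ℂ :=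
  (V : ℂ) • outer ghz + (((1 - V) / 8 : ℝ) : ℂ) • 1

/-!
Write `A ⊙ B` for the entrywise product. The GHZ vector lives on `|000⟩` and `|111⟩` only, so
`Tr_{AB}[(P ⊗ Q ⊗ I) |GHZ⟩⟨GHZ|] = (P ⊙ Q)ᵀ / 2`. If `X` and `Y` have zero diagonal, the cross
terms in `Π_a ⊙ Π_b = (I ± X) ⊙ (I ± Y) / 4` vanish and Charlie is left with
`(I + (-1)^(a+b) V (X ⊙ Y)ᵀ) / 8`. Each conditioning event therefore has probability `1/4`, and
`P(c_Z | a_X b_Y) = (1 + (-1)^(a+b+c) V ⟨X ⊗ Y ⊗ Z⟩) / 2` with the expectation taken in the pure GHZ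
state. The Mermin correlations `⟨xxx⟩ = 1` and `⟨xyy⟩ = ⟨yxy⟩ = ⟨yyx⟩ = -1` match the outcome signs
in `CP`, so all four of its terms equal `(1 + V) / 2`.
-/

section PartialTrace

variable {dA dB : ℕ}

lemma trAB_add (M N : Matrix (Fin dA × Fin dB × Fin 2) (Fin dA × Fin dB × Fin 2) ℂ) :
    trAB (M + N) = trAB M + trAB N := by
  ext i j
  simp only [trAB, of_apply, Matrix.add_apply, Finset.sum_add_distrib]

lemma trAB_smul (c : ℂ) (M : Matrix (Fin dA × Fin dB × Fin 2) (Fin dA × Fin dB × Fin 2) ℂ) :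
    trAB (c • M) = c • trAB M := by
  ext i j
  simp only [trAB, of_apply, Matrix.smul_apply, Finset.smul_sum]

lemma trAB_kronecker (P : Matrix (Fin dA) (Fin dA) ℂ) (Q : Matrix (Fin dB) (Fin dB) ℂ)
    (R : Matrix (Fin 2) (Fin 2) ℂ) :
    trAB (P ⊗ₖ (Q ⊗ₖ R)) = (P.trace * Q.trace) • R := by
  ext i j
  simp only [trAB, of_apply, kroneckerMap_apply, Matrix.smul_apply, smul_eq_mul, trace, diag_apply,
    ← mul_assoc]
  rw [Finset.sum_mul_sum]
  simp only [Finset.sum_mul]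

lemma trace_trAB (M : Matrix (Fin dA × Fin dB × Fin 2) (Fin dA × Fin dB × Fin 2) ℂ) :
    (trAB M).trace = M.trace := by
  simp only [trace, diag_apply, trAB, of_apply, Fintype.sum_prod_type]
  rw [Finset.sum_comm]
  exact Finset.sum_congr rfl fun _ _ => Finset.sum_comm

lemma mul_trAB (R : Matrix (Fin 2) (Fin 2) ℂ)
    (M : Matrix (Fin dA × Fin dB × Fin 2) (Fin dA × Fin dB × Fin 2) ℂ) :
    R * trAB M = trAB ((1 ⊗ₖ (1 ⊗ₖ R)) * M) := by
  ext i j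
  simp only [trAB, of_apply, mul_apply, kroneckerMap_apply, Fintype.sum_prod_type, one_apply,
    ite_mul, one_mul, zero_mul, Finset.sum_ite_irrel, Finset.sum_const_zero, Finset.sum_ite_eq,
    Finset.mem_univ, if_true, Finset.mul_sum]
  rw [Finset.sum_comm]
  exact Finset.sum_congr rfl fun _ _ => Finset.sum_comm

lemma trace_mul_trAB_kronecker_one_mul (P : Matrix (Fin dA) (Fin dA) ℂ)
    (Q : Matrix (Fin dB) (Fin dB) ℂ) (R : Matrix (Fin 2) (Fin 2) ℂ)
    (M : Matrix (Fin dA × Fin dB × Fin 2) (Fin dA × Fin dB × Fin 2) ℂ) :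
    (R * trAB ((P ⊗ₖ (Q ⊗ₖ 1)) * M)).trace = ((P ⊗ₖ (Q ⊗ₖ R)) * M).trace := by
  rw [mul_trAB, trace_trAB, ← Matrix.mul_assoc, ← mul_kronecker_mul, ← mul_kronecker_mul,
    Matrix.one_mul, Matrix.one_mul, Matrix.mul_one]

end PartialTrace

section Projector

lemma trace_eq_zero_of_diag_eq_zero {n R : Type*} [Fintype n] [AddCommMonoid R]
    {A : Matrix n n R} (hA : A.diag = 0) : A.trace = 0 :=
  Finset.sum_eq_zero fun i _ => congrFun hA i

lemma proj_eq {d : ℕ} (a : Fin 2) (O : Matrix (Fin d) (Fin d) ℂ) :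
    Proj a O = (2 : ℂ)⁻¹ • (1 + (-1 : ℂ) ^ (a : ℕ) • O) := by
  fin_cases a <;> simp [Proj]

lemma trace_proj_of_trace_eq_zero {d : ℕ} (a : Fin 2) {O : Matrix (Fin d) (Fin d) ℂ}
    (hO : O.trace = 0) : (Proj a O).trace = d / 2 := by
  rw [proj_eq, trace_smul, trace_add, trace_smul, hO, trace_one, Fintype.card_fin, smul_zero,
    add_zero, smul_eq_mul, div_eq_inv_mul]

lemma proj_hadamard_proj {d : ℕ} (a b : Fin 2) {X Y : Matrix (Fin d) (Fin d) ℂ}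
    (hX : X.diag = 0) (hY : Y.diag = 0) :
    Proj a X ⊙ Proj b Y = (4 : ℂ)⁻¹ • (1 + (-1 : ℂ) ^ (a + b : ℕ) • (X ⊙ Y)) := by
  simp only [proj_eq, smul_hadamard, hadamard_smul, add_hadamard, hadamard_add,
    hadamard_one_eq_zero_iff.mpr hX, one_hadamard_eq_zero_iff.mpr hY,
    one_hadamard_eq_one_iff.mpr diag_one, pow_add]
  module

end Projector

section GHZ

lemma outer_ghz_apply (p q : Fin 2 × Fin 2 × Fin 2) :
    outer ghz p q =
      if (p.1 = p.2.1 ∧ p.2.1 = p.2.2) ∧ (q.1 = q.2.1 ∧ q.2.1 = q.2.2) then 2⁻¹ else 0 := by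
  have ghz_apply (r : Fin 2 × Fin 2 × Fin 2) :
      ghz r = if r.1 = r.2.1 ∧ r.2.1 = r.2.2 then ((√2 : ℝ) : ℂ)⁻¹ else 0 := by
    fin_cases r <;> simp [ghz]
  have inv_sqrt_two_mul_self : ((√2 : ℝ) : ℂ)⁻¹ * ((√2 : ℝ) : ℂ)⁻¹ = 2⁻¹ := by
    rw [← mul_inv, ← ofReal_mul, Real.mul_self_sqrt zero_le_two, ofReal_ofNat]
  simp only [outer, of_apply, ghz_apply, ite_and]
  split_ifs <;> simp [inv_sqrt_two_mul_self]

lemma trAB_kronecker_one_mul_outer_ghz (P Q : Matrix (Fin 2) (Fin 2) ℂ) :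
    trAB ((P ⊗ₖ (Q ⊗ₖ 1)) * outer ghz) = (2 : ℂ)⁻¹ • (P ⊙ Q)ᵀ := by
  ext i j
  fin_cases i <;> fin_cases j <;>
    simp [trAB, mul_apply, outer_ghz_apply, Fintype.sum_prod_type, one_apply, mul_comm]

/-- The correlation `⟨GHZ| X ⊗ Y ⊗ Z |GHZ⟩` of three local observables in the GHZ state, written
as the trace against the density matrix `|GHZ⟩⟨GHZ|`. -/
def ghzCorrelation (X Y Z : Matrix (Fin 2) (Fin 2) ℂ) : ℂ :=
  ((X ⊗ₖ (Y ⊗ₖ Z)) * outer ghz).trace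

lemma ghzCorrelation_eq_trace (X Y Z : Matrix (Fin 2) (Fin 2) ℂ) :
    ghzCorrelation X Y Z = 2⁻¹ * (Z * (X ⊙ Y)ᵀ).trace := by
  rw [ghzCorrelation, ← trace_mul_trAB_kronecker_one_mul, trAB_kronecker_one_mul_outer_ghz,
    Matrix.mul_smul, trace_smul, smul_eq_mul]

lemma ghzCorrelation_eq_sum (X Y Z : Matrix (Fin 2) (Fin 2) ℂ) :
    ghzCorrelation X Y Z = 2⁻¹ * ∑ i, ∑ j, X i j * Y i j * Z i j := by
  rw [ghzCorrelation_eq_trace, ← sum_hadamard_eq, hadamard_comm]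
  rfl

lemma ghzCorrelation_sx_sx_sx : ghzCorrelation sx sx sx = 1 := by
  norm_num [ghzCorrelation_eq_sum, sx]

lemma ghzCorrelation_sx_sy_sy : ghzCorrelation sx sy sy = -1 := by
  norm_num [ghzCorrelation_eq_sum, sx, sy]

lemma ghzCorrelation_sy_sx_sy : ghzCorrelation sy sx sy = -1 := by
  norm_num [ghzCorrelation_eq_sum, sx, sy]

lemma ghzCorrelation_sy_sy_sx : ghzCorrelation sy sy sx = -1 := by
  norm_num [ghzCorrelation_eq_sum, sx, sy]

end GHZ

section NoisyGHZ

lemma condState_ghzV (V : ℝ) (X Y : Matrix (Fin 2) (Fin 2) ℂ) (a b : Fin 2) :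
    condState (ghzV V) X Y a b = ((V : ℂ) / 2) • (Proj a X ⊙ Proj b Y)ᵀ +
      ((1 - (V : ℂ)) / 8 * ((Proj a X).trace * (Proj b Y).trace)) • 1 := by
  rw [condState, ghzV, Matrix.mul_add, Matrix.mul_smul, Matrix.mul_smul, Matrix.mul_one, trAB_add,
    trAB_smul, trAB_smul, trAB_kronecker_one_mul_outer_ghz, trAB_kronecker, smul_smul, smul_smul]
  push_cast
  rfl

variable (V : ℝ) {X Y Z : Matrix (Fin 2) (Fin 2) ℂ} (a b c : Fin 2)

lemma condState_ghzV_of_diag_eq_zero (hX : X.diag = 0) (hY : Y.diag = 0) :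
    condState (ghzV V) X Y a b =
      (8 : ℂ)⁻¹ • (1 + ((-1) ^ (a + b : ℕ) * (V : ℂ)) • (X ⊙ Y)ᵀ) := by
  have trace_proj {O : Matrix (Fin 2) (Fin 2) ℂ} (hO : O.diag = 0) (e : Fin 2) :
      (Proj e O).trace = 1 := by
    rw [trace_proj_of_trace_eq_zero e (trace_eq_zero_of_diag_eq_zero hO)]
    norm_num
  rw [condState_ghzV, proj_hadamard_proj a b hX hY, trace_proj hX, trace_proj hY, transpose_smul,
    transpose_add, transpose_one, transpose_smul]
  module

lemma trace_condState_ghzV (hX : X.diag = 0) (hY : Y.diag = 0) :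
    (condState (ghzV V) X Y a b).trace = 4⁻¹ := by
  have trace_hadamard : (X ⊙ Y).trace = 0 :=
    Finset.sum_eq_zero fun i _ => mul_eq_zero_of_left (congrFun hX i) (Y i i)
  rw [condState_ghzV_of_diag_eq_zero V a b hX hY, trace_smul, trace_add, trace_smul,
    trace_transpose, trace_hadamard, trace_one, Fintype.card_fin]
  norm_num

lemma trace_proj_mul_condState_ghzV (hX : X.diag = 0) (hY : Y.diag = 0) (hZ : Z.trace = 0) :
    (Proj c Z * condState (ghzV V) X Y a b).trace =
      8⁻¹ * (1 + (-1) ^ (a + b + c : ℕ) * V * ghzCorrelation X Y Z) := by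
  have trace_mul_condState : (Z * condState (ghzV V) X Y a b).trace =
      4⁻¹ * ((-1) ^ (a + b : ℕ) * V * ghzCorrelation X Y Z) := by
    rw [condState_ghzV_of_diag_eq_zero V a b hX hY, Matrix.mul_smul, Matrix.mul_add,
      Matrix.mul_one, Matrix.mul_smul, trace_smul, trace_add, trace_smul, hZ,
      ghzCorrelation_eq_trace]
    simp only [smul_eq_mul]
    ring
  rw [proj_eq, Matrix.smul_mul, Matrix.add_mul, Matrix.one_mul, Matrix.smul_mul, trace_smul,
    trace_add, trace_smul, trace_condState_ghzV V a b hX hY, trace_mul_condState]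
  simp only [smul_eq_mul]
  ring

lemma condProb_condState_ghzV (hX : X.diag = 0) (hY : Y.diag = 0) (hZ : Z.trace = 0) :
    condProb Z (condState (ghzV V) X Y a b) c =
      (1 + (-1) ^ (a + b + c : ℕ) * V * (ghzCorrelation X Y Z).re) / 2 := by
  have joint_eq_ofReal_mul : (Proj c Z * condState (ghzV V) X Y a b).trace =
      (8⁻¹ : ℝ) * (1 + ((-1) ^ (a + b + c : ℕ) * V : ℝ) * ghzCorrelation X Y Z) := by
    rw [trace_proj_mul_condState_ghzV V a b c hX hY hZ]
    push_cast
    rfl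
  have marginal_eq_ofReal : (condState (ghzV V) X Y a b).trace = (4⁻¹ : ℝ) := by
    rw [trace_condState_ghzV V a b hX hY]
    push_cast
    rfl
  rw [condProb, joint_eq_ofReal_mul, marginal_eq_ofReal, re_ofReal_mul, add_re, one_re,
    re_ofReal_mul, ofReal_re]
  ring

lemma posEvents_ghzV {X0 X1 Y0 Y1 : Matrix (Fin 2) (Fin 2) ℂ} (hX0 : X0.diag = 0)
    (hX1 : X1.diag = 0) (hY0 : Y0.diag = 0) (hY1 : Y1.diag = 0) :
    PosEvents (ghzV V) X0 X1 Y0 Y1 := by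
  simp only [PosEvents, trace_condState_ghzV, hX0, hX1, hY0, hY1]
  norm_num

end NoisyGHZ

section PauliSettings

lemma diag_sx : sx.diag = 0 := by
  ext i
  fin_cases i <;> rfl

lemma diag_sy : sy.diag = 0 := by
  ext i
  fin_cases i <;> rfl

lemma CP_ghzV_pauli (V : ℝ) : CP (ghzV V) sx sy sx sy = 2 + 2 * V := by
  rw [CP, condProb_condState_ghzV V 1 1 0 diag_sx diag_sx trace_sx,
    condProb_condState_ghzV V 0 1 0 diag_sy diag_sy trace_sx,
    condProb_condState_ghzV V 0 1 0 diag_sx diag_sy trace_sy,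
    condProb_condState_ghzV V 0 1 0 diag_sy diag_sx trace_sy, ghzCorrelation_sx_sx_sx,
    ghzCorrelation_sy_sy_sx, ghzCorrelation_sx_sy_sy, ghzCorrelation_sy_sx_sy]
  simp only [Fin.val_zero, Fin.val_one, one_re, neg_re]
  ring

lemma two_add_sqrt_two_lt_two_add_two_mul_iff (V : ℝ) : 2 + √2 < 2 + 2 * V ↔ 1 / √2 < V := by
  rw [add_lt_add_iff_left, ← Real.sqrt_div_self', div_lt_iff₀' zero_lt_two]

theorem stmt18_general (V : ℝ) :
    PosEvents (ghzV V) sx sy sx sy ∧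
    CP (ghzV V) sx sy sx sy = 2 + 2 * V ∧
    (2 + Real.sqrt 2 < CP (ghzV V) sx sy sx sy ↔ 1 / Real.sqrt 2 < V) := by
  refine ⟨posEvents_ghzV V diag_sx diag_sy diag_sx diag_sy, CP_ghzV_pauli V, ?_⟩
  rw [CP_ghzV_pauli]
  exact two_add_sqrt_two_lt_two_add_two_mul_iff V

end PauliSettings

/-- for the noisy GHZ state and settings `X₀ = Y₀ = Z₀ = σx`,
`X₁ = Y₁ = Z₁ = σy`, the conditioning events have positive probability, `CP = 2 + 2V`, and
`CP > 2 + √2` if and only if `V > 1/√2`. -/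
theorem stmt18 (V : ℝ) (h0 : 0 ≤ V) (h1 : V ≤ 1) :
    PosEvents (ghzV V) sx sy sx sy ∧
    CP (ghzV V) sx sy sx sy = 2 + 2 * V ∧
    (2 + Real.sqrt 2 < CP (ghzV V) sx sy sx sy ↔ 1 / Real.sqrt 2 < V) :=
  stmt18_general V

end Paper
end
end
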